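/- arXiv:1502.08017 — 6 statements merged into one kernel-verified Lean document; each statement's English description precedes it below -/
import Mathlib

section
/- Let B and C be categories with binary products and let F : B ⥤ C be a functor preserving binary products. For any morphism t : X ⟶ Y in B, the square with top edge ⟨1_X, t⟩ : X ⟶ X ⨯ Y, left edge t : X ⟶ Y, right edge t ⨯ 1_Y : X ⨯ Y ⟶ Y ⨯ Y and bottom edge the diagonal d_Y : Y ⟶ Y ⨯ Y commutes and is a pullback, and its image under F is again a pullback square in C (the square is a product-absolute pullback). -/
/-!
The graph `⟨1_X, t⟩` is the pullback of the diagonal along `t ⨯ 1_Y`: a pair `(a, b)` with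
`a : W ⟶ X ⨯ Y`, `b : W ⟶ Y` equalizing the two legs satisfies `a.fst ≫ t = b = a.snd`, so it
factors through `X` via `a.fst`, uniquely because `⟨1_X, t⟩` is a split mono. This uses only
equations between composites with projections and the joint monicity of each pair of projections.
A functor preserving binary products preserves both, so `isPullback_graph` applies equally to
the original square (with the chosen products) and to its image.
-/

open CategoryTheory CategoryTheory.Limits

/-- The graph square is a pullback for any `Q`, `R` playing the roles of `X ⨯ Y` and `Y ⨯ Y`,
with `p, q` and `p', q'` as projections; only the joint monicity of these pairs is needed. -/
lemma isPullback_graph {C : Type*} [Category C] {X Y Q R : C} {t : X ⟶ Y}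
    {p : Q ⟶ X} {q : Q ⟶ Y} {p' q' : R ⟶ Y}
    (hQ : ∀ {W : C} (a b : W ⟶ Q), a ≫ p = b ≫ p → a ≫ q = b ≫ q → a = b)
    (hR : ∀ {W : C} (a b : W ⟶ R), a ≫ p' = b ≫ p' → a ≫ q' = b ≫ q' → a = b)
    {g : X ⟶ Q} {f : Q ⟶ R} {d : Y ⟶ R}
    (hgp : g ≫ p = 𝟙 X) (hgq : g ≫ q = t) (hfp : f ≫ p' = p ≫ t) (hfq : f ≫ q' = q)
    (hdp : d ≫ p' = 𝟙 Y) (hdq : d ≫ q' = 𝟙 Y) :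
    IsPullback g t f d := by
  refine IsPullback.mk' ?_ ?_ ?_
  · apply hR
    · rw [Category.assoc, Category.assoc, hfp, hdp, ← Category.assoc, hgp, Category.id_comp,
        Category.comp_id]
    · simp [hfq, hdq, hgq]
  · intro W u v huv _
    simpa [hgp] using congrArg (· ≫ p) huv
  · intro W a b hab
    have h₁ : a ≫ p ≫ t = b := by
      simpa [hfp, hdp] using congrArg (· ≫ p') hab
    have h₂ : a ≫ q = b := by
      simpa [hfq, hdq] using congrArg (· ≫ q') hab
    refine ⟨a ≫ p, hQ _ _ ?_ ?_, ?_⟩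
    · simp [hgp]
    · simp [hgq, h₁, h₂]
    · simp [h₁]

/-- For a functor preserving binary products, the images of the projections are jointly monic. -/
lemma map_prod_hom_ext {B C : Type*} [Category B] [Category C] [HasBinaryProducts B]
    (F : B ⥤ C) [PreservesLimitsOfShape (Discrete WalkingPair) F] {X Y : B} {W : C}
    (a b : W ⟶ F.obj (X ⨯ Y))
    (h₁ : a ≫ F.map (prod.fst : X ⨯ Y ⟶ X) = b ≫ F.map prod.fst)
    (h₂ : a ≫ F.map (prod.snd : X ⨯ Y ⟶ Y) = b ≫ F.map prod.snd) : a = b :=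
  BinaryFan.IsLimit.hom_ext (isLimitOfHasBinaryProductOfPreservesLimit F X Y) h₁ h₂

/-- For a morphism `t : X ⟶ Y` in a category with binary products, the square with top
edge `⟨1_X, t⟩`, left edge `t`, right edge `t ⨯ 1_Y` and bottom edge the diagonal `d_Y`
is a product-absolute pullback: it is a pullback, and its image under any
binary-product-preserving functor is again a pullback. -/
theorem statement0 {B : Type*} {C : Type*} [Category B] [Category C]
    [HasBinaryProducts B] [HasBinaryProducts C]
    (F : B ⥤ C) [PreservesLimitsOfShape (Discrete WalkingPair) F]
    {X Y : B} (t : X ⟶ Y) :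
    IsPullback (prod.lift (𝟙 X) t) t (prod.map t (𝟙 Y)) (diag Y) ∧
      IsPullback (F.map (prod.lift (𝟙 X) t)) (F.map t)
        (F.map (prod.map t (𝟙 Y))) (F.map (diag Y)) := by
  constructor
  · exact isPullback_graph (fun _ _ => prod.hom_ext) (fun _ _ => prod.hom_ext)
      (prod.lift_fst _ _) (prod.lift_snd _ _) (prod.map_fst _ _)
      ((prod.map_snd _ _).trans (Category.comp_id _)) (prod.lift_fst _ _) (prod.lift_snd _ _)
  · refine isPullback_graph (map_prod_hom_ext F) (map_prod_hom_ext F) ?_ ?_ ?_ ?_ ?_ ?_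
    · rw [← F.map_comp, prod.lift_fst, F.map_id]
    · rw [← F.map_comp, prod.lift_snd]
    · rw [← F.map_comp, ← F.map_comp, prod.map_fst]
    · rw [← F.map_comp, prod.map_snd, Category.comp_id]
    · rw [← F.map_comp, prod.lift_fst, F.map_id]
    · rw [← F.map_comp, prod.lift_snd, F.map_id]
end

section
/- Let B and C be categories with binary products and let F : B ⥤ C be a functor preserving binary products. For any object X of B, the coassociativity square of the diagonal — the square with top edge d_X : X ⟶ X ⨯ X, left edge d_X : X ⟶ X ⨯ X, right edge 1_X ⨯ d_X : X ⨯ X ⟶ X ⨯ (X ⨯ X) and bottom edge d_X ⨯ 1_X : X ⨯ X ⟶ (X ⨯ X) ⨯ X (composed with the associativity isomorphism so that both composites land in the same triple product) — commutes and is a pullback, and its image under F is again a pullback square in C (the square is a product-absolute pullback). -/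
open CategoryTheory CategoryTheory.Limits

/-!
A generalized element of the pullback is a pair `((a, b), (c, d))` with
`(a, (b, b)) = (c, (c, d))`. Comparing the three coordinates gives `a = c`, `b = c`, `b = d`, so
both pairs are the diagonal of `a`. This argument uses only that the two projections of the product
are jointly monic, together with equations between composites with projections
(`isPullback_of_jointly_monic`). The equations are preserved by every functor, and joint monicity
of the projections is preserved by a functor that preserves binary products.
-/

/-- Here `P` plays the role of `Y ⨯ Y` with projections `p₁, p₂` and diagonal `d`, while `T` plays
the role of the triple product with projections `t₁, t₂, t₃`; the maps `f` and `g` are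
`(a, b) ↦ (a, b, b)` and `(a, b) ↦ (a, a, b)`. Neither `P` nor `T` is required to be a product. -/
theorem isPullback_of_jointly_monic {C : Type*} [Category C] {Y P T : C} {d : Y ⟶ P}
    {p₁ p₂ : P ⟶ Y} {f g : P ⟶ T} {t₁ t₂ t₃ : T ⟶ Y}
    (hp : ∀ {W : C} (u v : W ⟶ P), u ≫ p₁ = v ≫ p₁ → u ≫ p₂ = v ≫ p₂ → u = v)
    (w : d ≫ f = d ≫ g) (d₁ : d ≫ p₁ = 𝟙 Y) (d₂ : d ≫ p₂ = 𝟙 Y)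
    (f₁ : f ≫ t₁ = p₁) (f₂ : f ≫ t₂ = p₂) (f₃ : f ≫ t₃ = p₂)
    (g₁ : g ≫ t₁ = p₁) (g₂ : g ≫ t₂ = p₁) (g₃ : g ≫ t₃ = p₂) :
    IsPullback d d f g := by
  have key : ∀ {W : C} (u v : W ⟶ P), u ≫ f = v ≫ g →
      (u ≫ p₁) ≫ d = u ∧ (u ≫ p₁) ≫ d = v := by
    intro W u v h
    have h₁ : u ≫ p₁ = v ≫ p₁ := by
      simpa only [Category.assoc, f₁, g₁] using congrArg (· ≫ t₁) h
    have h₂ : u ≫ p₂ = v ≫ p₁ := by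
      simpa only [Category.assoc, f₂, g₂] using congrArg (· ≫ t₂) h
    have h₃ : u ≫ p₂ = v ≫ p₂ := by
      simpa only [Category.assoc, f₃, g₃] using congrArg (· ≫ t₃) h
    constructor <;> apply hp <;>
      simp only [Category.assoc, d₁, d₂, Category.comp_id, h₁, h₂, ← h₃]
  refine ⟨⟨w⟩, ⟨PullbackCone.IsLimit.mk w (fun s => s.fst ≫ p₁)
    (fun s => (key s.fst s.snd s.condition).1) (fun s => (key s.fst s.snd s.condition).2) ?_⟩⟩
  intro s m hm _
  rw [← hm, Category.assoc, d₁, Category.comp_id]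

/-- The coassociativity square of the diagonal — top and left edges `d_X`, right edge
`1_X ⨯ d_X`, bottom edge `(d_X ⨯ 1_X)` composed with the associativity isomorphism —
is a product-absolute pullback: it is a pullback, and its image under any
binary-product-preserving functor is again a pullback. -/
theorem statement4 {B : Type*} {C : Type*} [Category B] [Category C]
    [HasBinaryProducts B] [HasBinaryProducts C]
    (F : B ⥤ C) [PreservesLimitsOfShape (Discrete WalkingPair) F]
    (X : B) :
    IsPullback (diag X) (diag X) (prod.map (𝟙 X) (diag X))
        (prod.map (diag X) (𝟙 X) ≫ (prod.associator X X X).hom) ∧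
      IsPullback (F.map (diag X)) (F.map (diag X)) (F.map (prod.map (𝟙 X) (diag X)))
        (F.map (prod.map (diag X) (𝟙 X) ≫ (prod.associator X X X).hom)) := by
  have w : diag X ≫ prod.map (𝟙 X) (diag X) =
      diag X ≫ prod.map (diag X) (𝟙 X) ≫ (prod.associator X X X).hom := by
    ext <;> simp [prod.lift_fst, prod.lift_snd]
  constructor
  · refine isPullback_of_jointly_monic (p₁ := prod.fst) (p₂ := prod.snd) (t₁ := prod.fst)
      (t₂ := prod.snd ≫ prod.fst) (t₃ := prod.snd ≫ prod.snd)
      (fun u v h₁ h₂ => Limits.prod.hom_ext h₁ h₂) w ?_ ?_ ?_ ?_ ?_ ?_ ?_ ?_ <;>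
      simp [prod.lift_fst, prod.lift_snd, prod.lift_snd_assoc]
  · refine isPullback_of_jointly_monic (p₁ := F.map prod.fst) (p₂ := F.map prod.snd)
      (t₁ := F.map prod.fst) (t₂ := F.map (prod.snd ≫ prod.fst))
      (t₃ := F.map (prod.snd ≫ prod.snd))
      (fun u v h₁ h₂ => BinaryFan.IsLimit.hom_ext
        (mapIsLimitOfPreservesOfIsLimit F _ _ (prodIsProd X X)) h₁ h₂) ?_ ?_ ?_ ?_ ?_ ?_ ?_ ?_ ?_
    · rw [← F.map_comp, w, F.map_comp]
    all_goals
      rw [← F.map_comp]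
      first
        | rw [← F.map_id]; congr 1; simp [prod.lift_fst, prod.lift_snd]
        | congr 1; simp [prod.lift_fst, prod.lift_snd, prod.lift_snd_assoc]
end

section
/- Let C be a category with pullbacks and let f : X ⟶ Y be a morphism, so that the slice categories Over X and Over Y have binary products (computed by pullback over the base) and there is an adjunction Σ_f ⊣ f* between Σ_f = Over.map f : Over X ⥤ Over Y and f* = Over.pullback f : Over Y ⥤ Over X. Then Frobenius reciprocity holds for the codomain fibration: for every A in Over X and B in Over Y, the canonical morphism Σ_f(A ⨯ f*(B)) ⟶ Σ_f(A) ⨯ B — whose first component is Σ_f applied to the first product projection, and whose second component is Σ_f applied to the second product projection followed by the counit ε_B : Σ_f(f*(B)) ⟶ B of the adjunction — is an isomorphism. -/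
/-!
A map from `T` to `Σ_f(A) ⨯ B` over `Y` turns `T` into an object over `X`, through
`T ⟶ A ⟶ X`; over `X` it is then a map to `A` together with, by the universal property of the
pullback `f*(B)`, a map to `f*(B)`. Applying this to the identity of `Σ_f(A) ⨯ B` produces the
inverse of the canonical morphism. One composite is compared with the identity in `Over Y`,
through the projections of `Σ_f(A) ⨯ B`; the other in `Over X`, through the projections of
`A ⨯ f*(B)`, which is possible because the underlying morphism of the canonical map commutes with
the structure maps to `X`.
-/

open CategoryTheory CategoryTheory.Limits

attribute [local instance] CategoryTheory.Over.ConstructProducts.over_binaryProduct_of_pullback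

/-- Frobenius reciprocity with the counit replaced by any morphism `ε` over `Y` whose underlying
morphism is the pullback projection to `B`. The codomain of `ε` is then `B` itself and not
`(𝟭 (Over Y)).obj B`, so that the product lemmas apply syntactically. -/
theorem isIso_frobenius {C : Type*} [Category C] [HasPullbacks C]
    {X Y : C} (f : X ⟶ Y) (A : Over X) (B : Over Y)
    (ε : (Over.map f).obj ((Over.pullback f).obj B) ⟶ B) (hε : ε.left = pullback.fst B.hom f) :
    IsIso (prod.lift
      ((Over.map f).map (prod.fst : A ⨯ (Over.pullback f).obj B ⟶ A))
      ((Over.map f).map (prod.snd : A ⨯ (Over.pullback f).obj B ⟶ (Over.pullback f).obj B) ≫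
        ε)) := by
  set F := prod.lift
      ((Over.map f).map (prod.fst : A ⨯ (Over.pullback f).obj B ⟶ A))
      ((Over.map f).map (prod.snd : A ⨯ (Over.pullback f).obj B ⟶ (Over.pullback f).obj B) ≫
        ε) with hF
  have hF1 : F.left ≫ (prod.fst : (Over.map f).obj A ⨯ B ⟶ _).left =
      (prod.fst : A ⨯ (Over.pullback f).obj B ⟶ A).left := by
    rw [← Over.comp_left, hF, prod.lift_fst]; rfl
  have hF2 : F.left ≫ (prod.snd : (Over.map f).obj A ⨯ B ⟶ _).left =
      (prod.snd : A ⨯ (Over.pullback f).obj B ⟶ _).left ≫ pullback.fst B.hom f := by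
    rw [← Over.comp_left, hF, prod.lift_snd, Over.comp_left, hε]
    rfl
  let p : (Over.map f).obj A ⨯ B ⟶ (Over.map f).obj A := prod.fst
  let q : (Over.map f).obj A ⨯ B ⟶ B := prod.snd
  have hp : p.left ≫ A.hom ≫ f = ((Over.map f).obj A ⨯ B).hom := Over.w p
  have hq : q.left ≫ B.hom = ((Over.map f).obj A ⨯ B).hom := Over.w q
  -- `Σ_f(A) ⨯ B` regarded as an object over `X` through its projection to `A`
  let P : Over X := Over.mk (p.left ≫ A.hom)
  let p' : P ⟶ A := Over.homMk p.left
  let q' : P ⟶ (Over.pullback f).obj B :=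
    Over.homMk (pullback.lift q.left (p.left ≫ A.hom) (by rw [hq, Category.assoc, hp]))
      (pullback.lift_snd _ _ _)
  let k : P ⟶ A ⨯ (Over.pullback f).obj B := prod.lift p' q'
  have hk1 : k.left ≫ (prod.fst : A ⨯ (Over.pullback f).obj B ⟶ A).left = p.left := by
    rw [← Over.comp_left, prod.lift_fst]; rfl
  have hk2 : k ≫ (prod.snd : A ⨯ (Over.pullback f).obj B ⟶ _) = q' := prod.lift_snd _ _
  have hk2' : k.left ≫ (prod.snd : A ⨯ (Over.pullback f).obj B ⟶ _).left ≫
      pullback.fst B.hom f = q.left := by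
    rw [← Over.comp_left_assoc, hk2]
    exact pullback.lift_fst _ _ _
  have hkw : k.left ≫ (A ⨯ (Over.pullback f).obj B).hom = p.left ≫ A.hom := Over.w k
  let G : (Over.map f).obj A ⨯ B ⟶ (Over.map f).obj (A ⨯ (Over.pullback f).obj B) :=
    Over.homMk k.left (by
      change k.left ≫ (A ⨯ (Over.pullback f).obj B).hom ≫ f = _
      rw [reassoc_of% hkw, hp])
  let F' : A ⨯ (Over.pullback f).obj B ⟶ P := Over.homMk F.left (by
    change F.left ≫ p.left ≫ A.hom = _
    rw [reassoc_of% hF1]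
    exact Over.w _)
  have hF'k : F' ≫ k = 𝟙 _ := by
    apply prod.hom_ext
    · ext
      change (F.left ≫ k.left) ≫ _ = _
      rw [Category.assoc, hk1, hF1, Category.id_comp]
    · rw [Category.assoc, hk2, Category.id_comp]
      ext
      -- two maps over `X` into `f*(B)` agree once they agree after projecting to `B`
      apply pullback.hom_ext
      · change (F.left ≫ pullback.lift _ _ _) ≫ _ = _
        rw [Category.assoc, pullback.lift_fst]
        exact hF2
      · exact (Over.w (F' ≫ q')).trans (Over.w prod.snd).symm
  refine ⟨G, ?_, ?_⟩
  · ext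
    have h := congrArg Over.Hom.left hF'k
    exact h
  · have h1 : k.left ≫ F.left ≫ p.left = p.left := (congrArg (k.left ≫ ·) hF1).trans hk1
    have h2 : k.left ≫ F.left ≫ q.left = q.left := (congrArg (k.left ≫ ·) hF2).trans hk2'
    apply prod.hom_ext
    · ext
      rw [Category.id_comp]
      exact (Category.assoc _ _ _).trans h1
    · ext
      rw [Category.id_comp]
      exact (Category.assoc _ _ _).trans h2

/-- Frobenius reciprocity for the codomain fibration: for `f : X ⟶ Y` in a category with
pullbacks, `A` over `X` and `B` over `Y`, the canonical morphism
`Σ_f(A ⨯ f*(B)) ⟶ Σ_f(A) ⨯ B` — with first component `Σ_f` of the first projection and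
second component `Σ_f` of the second projection followed by the counit of `Σ_f ⊣ f*` —
is an isomorphism. -/
theorem statement8 {C : Type*} [Category C] [HasPullbacks C]
    {X Y : C} (f : X ⟶ Y) (A : Over X) (B : Over Y) :
    IsIso (prod.lift
      ((Over.map f).map (prod.fst : A ⨯ (Over.pullback f).obj B ⟶ A))
      ((Over.map f).map (prod.snd : A ⨯ (Over.pullback f).obj B ⟶ (Over.pullback f).obj B) ≫
        (Over.mapPullbackAdj f).counit.app B)) := by
  exact isIso_frobenius f A B ((Over.mapPullbackAdj f).counit.app B) (by simp)
end

section
/- Let C be a category with pullbacks and let u : P ⟶ X, v : P ⟶ Z, f : X ⟶ Y, g : Z ⟶ Y form a pullback square (f ∘ u = g ∘ v). Then the Beck–Chevalley transformation for slice categories is invertible: the mate, with respect to the adjunctions Over.map u ⊣ Over.pullback u and Over.map g ⊣ Over.pullback g, of the canonical natural isomorphism Over.map v ⋙ Over.map g ≅ Over.map u ⋙ Over.map f is a natural isomorphism Over.pullback u ⋙ Over.map v ≅ Over.map f ⋙ Over.pullback g of functors Over X ⥤ Over Z. -/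
open CategoryTheory CategoryTheory.Limits

/-!
A morphism of slices is invertible as soon as its underlying morphism is, so the claim can be
checked on the underlying morphism of each component. For `A : Over X` this is a map
`A ×[X] P ⟶ A ×[Y] Z`. The counit of `Over.map g ⊣ Over.pullback g` is the first projection, so the
defining property of the mate (`mateEquiv_counit`) says the map commutes with the projections to
`A`; being a morphism over `Z`, it also commutes with the maps to `Z`. By pasting the pullback
square of `A ⟶ X ⟵ P` with the given one, `A ×[X] P` is itself a pullback of `A ⟶ Y ⟵ Z`, and a
comparison map between two pullbacks of the same cospan is an isomorphism.
-/

/-- All three isomorphisms in the composite are the identity on underlying objects. -/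
lemma mapSquare_app_left {C : Type*} [Category C] {P X Z Y : C}
    (u : P ⟶ X) (v : P ⟶ Z) (f : X ⟶ Y) (g : Z ⟶ Y)
    (h : Over.map (v ≫ g) = Over.map (u ≫ f)) (B : Over P) :
    (((Over.mapComp v g).symm ≪≫ eqToIso h ≪≫ Over.mapComp u f).hom.app B).left =
      𝟙 B.left := by
  simp

/-- The Beck–Chevalley transformation for slice categories along a pullback square is
invertible: for a pullback square `u ≫ f = v ≫ g`, the mate (with respect to the
adjunctions `Over.map u ⊣ Over.pullback u` and `Over.map g ⊣ Over.pullback g`) of the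
canonical natural isomorphism `Over.map v ⋙ Over.map g ≅ Over.map u ⋙ Over.map f` is a
natural isomorphism `Over.pullback u ⋙ Over.map v ≅ Over.map f ⋙ Over.pullback g`. -/
theorem statement9 {C : Type*} [Category C] [HasPullbacks C]
    {P X Z Y : C} (u : P ⟶ X) (v : P ⟶ Z) (f : X ⟶ Y) (g : Z ⟶ Y)
    (hpb : IsPullback u v f g) :
    IsIso (mateEquiv (Over.mapPullbackAdj u) (Over.mapPullbackAdj g)
      ((Over.mapComp v g).symm ≪≫ eqToIso (by rw [hpb.w]) ≪≫ Over.mapComp u f).hom) := by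
  have h : Over.map (v ≫ g) = Over.map (u ≫ f) := by rw [hpb.w]
  let α := ((Over.mapComp v g).symm ≪≫ eqToIso h ≪≫ Over.mapComp u f).hom
  let φ : Over.pullback u ⋙ Over.map v ⟶ Over.map f ⋙ Over.pullback g :=
    mateEquiv (Over.mapPullbackAdj u) (Over.mapPullbackAdj g) α
  change IsIso φ
  rw [NatTrans.isIso_iff_isIso_app]
  intro A
  let m : pullback A.hom u ⟶ pullback (A.hom ≫ f) g := (φ.app A).left
  have hfst : m ≫ pullback.fst (A.hom ≫ f) g = pullback.fst A.hom u := by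
    have e := congrArg CommaMorphism.left
      (mateEquiv_counit (Over.mapPullbackAdj u) (Over.mapPullbackAdj g) α A)
    have e' : m ≫ ((Over.mapPullbackAdj g).counit.app ((Over.map f).obj A)).left =
      (α.app ((Over.pullback u).obj A)).left ≫
        ((Over.mapPullbackAdj u).counit.app A).left := e
    rw [mapSquare_app_left u v f g h] at e'
    simpa using e'
  have hsnd : m ≫ pullback.snd (A.hom ≫ f) g = pullback.snd A.hom u ≫ v :=
    Over.w (φ.app A)
  have paste : IsPullback (pullback.fst A.hom u) (pullback.snd A.hom u ≫ v) (A.hom ≫ f) g :=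
    ((IsPullback.of_hasPullback A.hom u).flip.paste_horiz hpb.flip).flip
  have hm : m = (paste.isoIsPullback _ _ (IsPullback.of_hasPullback (A.hom ≫ f) g)).hom := by
    ext <;> simp [hfst, hsnd]
  have : IsIso ((Over.forget Z).map (φ.app A)) := by
    change IsIso m
    rw [hm]
    infer_instance
  exact isIso_of_reflects_iso (φ.app A) (Over.forget Z)
end

section
/- Existential quantification in the effective tripos is left adjoint to substitution and satisfies Frobenius reciprocity: for a function f : X → Y and φ : X → Set ℕ, define (∃_f φ) y = ⋃ { φ x | x : X, f x = y }. Then for all φ : X → Set ℕ and ψ : Y → Set ℕ: (i) ∃_f φ ⊑ ψ if and only if φ ⊑ ψ ∘ f; and (ii) ∃_f (φ ⊓' (ψ ∘ f)) ⊑ (∃_f φ) ⊓' ψ and (∃_f φ) ⊓' ψ ⊑ ∃_f (φ ⊓' (ψ ∘ f)). -/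
/-- `Tracks φ ψ` (written `φ ⊑ ψ`): there is a partial recursive function `F` such that
for every `x` and every `n ∈ φ x`, `F n` is defined and its value lies in `ψ x`. -/
def Tracks {X : Type*} (φ ψ : X → Set ℕ) : Prop :=
  ∃ F : ℕ →. ℕ, Nat.Partrec F ∧ ∀ x : X, ∀ n ∈ φ x, ∃ m ∈ F n, m ∈ ψ x

/-- The binary meet of `P(ℕ)`-valued predicates: `(φ ⊓' ψ) x` consists of the codes
`Nat.pair n m` with `n ∈ φ x` and `m ∈ ψ x`. -/
def inf' {X : Type*} (φ ψ : X → Set ℕ) : X → Set ℕ :=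
  fun x => { k | ∃ n ∈ φ x, ∃ m ∈ ψ x, k = Nat.pair n m }

/-- Existential quantification along `f : X → Y` in the effective tripos:
`(∃_f φ) y = ⋃ {φ x | f x = y}`. -/
def existsAlong {X Y : Type*} (f : X → Y) (φ : X → Set ℕ) : Y → Set ℕ :=
  fun y => { n | ∃ x : X, f x = y ∧ n ∈ φ x }

/-- Existential quantification in the effective tripos is left adjoint to substitution
and satisfies Frobenius reciprocity. -/
theorem statement15 {X Y : Type*} (f : X → Y) (φ : X → Set ℕ) (ψ : Y → Set ℕ) :
    (Tracks (existsAlong f φ) ψ ↔ Tracks φ (fun x => ψ (f x))) ∧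
      Tracks (existsAlong f (inf' φ (fun x => ψ (f x))))
        (inf' (existsAlong f φ) ψ) ∧
      Tracks (inf' (existsAlong f φ) ψ)
        (existsAlong f (inf' φ (fun x => ψ (f x)))) := by
  -- The same `F` tracks both sides of the adjunction. For Frobenius reciprocity the two
  -- predicates hold the same codes at every `y`, so the identity tracks each direction.
  refine ⟨⟨?_, ?_⟩, ⟨fun n => Part.some n, Nat.Partrec.some, ?_⟩,
    ⟨fun n => Part.some n, Nat.Partrec.some, ?_⟩⟩
  · rintro ⟨F, hF, h⟩
    exact ⟨F, hF, fun x n hn => h (f x) n ⟨x, rfl, hn⟩⟩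
  · rintro ⟨F, hF, h⟩
    refine ⟨F, hF, ?_⟩
    rintro _ n ⟨x, rfl, hn⟩
    exact h x n hn
  · rintro _ k ⟨x, rfl, n, hn, m, hm, rfl⟩
    exact ⟨_, Part.mem_some _, n, ⟨x, rfl, hn⟩, m, hm, rfl⟩
  · rintro _ k ⟨n, ⟨x, rfl, hn⟩, m, hm, rfl⟩
    exact ⟨_, Part.mem_some _, x, rfl, n, hn, m, hm, rfl⟩
end

section
/- Let C be a category with binary products and A an object of C. The forgetful functor Over.forget : Over A ⥤ C has right adjoint the functor star A : C ⥤ Over A sending X to the second projection X ⨯ A ⟶ A, and the comonad on C induced by this adjunction has underlying endofunctor X ↦ X ⨯ A. The comparison functor from Over A to the Eilenberg–Moore category of coalgebras of this comonad is an equivalence of categories; that is, the category of coalgebras for the comonad (− ⨯ A) on C is equivalent to the slice category Over A, so Over.forget is comonadic. -/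
/-!
The adjunction `Over.forget A ⊣ starA A` is the universal property of the product: a morphism
`t ⟶ starA A X` over `A` is a morphism `t.left ⟶ X ⨯ A` whose second component is `t.hom`.

For an arbitrary such adjunction, with unit `η` and counit `ε`, only one fact about `η` matters:
each `η_t` is a morphism over `A`, so `η_t ≫ prod.snd = t.hom`. A coalgebra morphism between
comparison objects commutes with the `η`s, so composing with `prod.snd` shows that it lies over
`A`: the comparison functor is full. If `a : X ⟶ X ⨯ A` is a coalgebra, then `a` itself is a
morphism over `A` from `t := (a ≫ prod.snd : X ⟶ A)` to `starA A X`; the counit law `a ≫ ε = 𝟙`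
says that its transpose is the identity, so `a = η_t` and the coalgebra is the image of `t`.
-/

open CategoryTheory CategoryTheory.Limits

noncomputable section

variable {C : Type*} [Category C] [HasBinaryProducts C]

/-- The functor `C ⥤ Over A` sending `X` to the second projection `X ⨯ A ⟶ A`. -/
def starA (A : C) : C ⥤ Over A where
  obj X := Over.mk (prod.snd : X ⨯ A ⟶ A)
  map f := Over.homMk (prod.map f (𝟙 A))

/-- The endofunctor `X ↦ X ⨯ A` of `C`. -/
def prodWith (A : C) : C ⥤ C where
  obj X := X ⨯ A
  map f := prod.map f (𝟙 A)

/-- The adjunction given by the universal property of the product: `f : t.left ⟶ X` corresponds to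
`(f, t.hom) : t.left ⟶ X ⨯ A`. -/
def forgetAdjStarA (A : C) : Over.forget A ⊣ starA A :=
  Adjunction.mkOfHomEquiv
    { homEquiv := fun t X =>
        { toFun := fun f => Over.homMk (V := (starA A).obj X)
            (prod.lift (show t.left ⟶ X from f) t.hom) (prod.lift_snd _ _)
          invFun := fun g => g.left ≫ (prod.fst : X ⨯ A ⟶ X)
          left_inv := fun f => prod.lift_fst _ _
          right_inv := fun g => by
            apply Over.OverMorphism.ext
            refine Limits.prod.hom_ext (prod.lift_fst _ _) ?_
            exact (prod.lift_snd _ _).trans (Over.w g).symm }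
      homEquiv_naturality_left_symm := fun f g => Category.assoc _ _ _
      homEquiv_naturality_right := fun {t X Y} f g => by
        apply Over.OverMorphism.ext
        change prod.lift (f ≫ g) t.hom =
          prod.lift (show t.left ⟶ X from f) t.hom ≫ prod.map g (𝟙 A)
        rw [prod.lift_map, Category.comp_id]
        rfl }

lemma unit_app_left_snd {A : C} (adj : Over.forget A ⊣ starA A) (t : Over A) :
    (adj.unit.app t).left ≫ (prod.snd : t.left ⨯ A ⟶ A) = t.hom :=
  Over.w (adj.unit.app t)

lemma comparison_full {A : C} (adj : Over.forget A ⊣ starA A) :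
    (Comonad.comparison adj).Full where
  map_surjective {t s} f := by
    let g : t.left ⟶ s.left := f.f
    have h : (adj.unit.app t).left ≫ prod.map g (𝟙 A) = g ≫ (adj.unit.app s).left := f.h
    have hg : g ≫ s.hom = t.hom := by
      have h' := congrArg (fun k => k ≫ (prod.snd : s.left ⨯ A ⟶ A)) h
      erw [Category.assoc, Category.assoc, prod.map_snd, Category.comp_id,
        unit_app_left_snd, unit_app_left_snd] at h'
      exact h'.symm
    exact ⟨Over.homMk g hg, Comonad.Coalgebra.Hom.ext rfl⟩

/-- The object over `A` underlying a coalgebra `a : X ⟶ X ⨯ A`, namely `a ≫ prod.snd : X ⟶ A`. -/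
def overOfCoalgebra {A : C} (adj : Over.forget A ⊣ starA A) (X : adj.toComonad.Coalgebra) :
    Over A :=
  Over.mk (Y := X.A) (X.a ≫ (prod.snd : X.A ⨯ A ⟶ A))

lemma unit_app_of_coalgebra {A : C} (adj : Over.forget A ⊣ starA A)
    (X : adj.toComonad.Coalgebra) :
    (adj.unit.app (overOfCoalgebra adj X)).left = X.a := by
  let t : Over A := overOfCoalgebra adj X
  let b : t ⟶ (starA A).obj X.A := Over.homMk X.a rfl
  -- The counit law of the coalgebra says that the transpose of `b` is the identity.
  have hb : (Over.forget A).map b ≫ adj.counit.app X.A = 𝟙 X.A := X.counit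
  have h1 : adj.homEquiv t X.A (𝟙 X.A) = b := by
    rw [← hb]
    exact (congrArg (adj.homEquiv t X.A) (adj.homEquiv_counit t X.A b).symm).trans
      (Equiv.apply_symm_apply _ b)
  have h2 : adj.homEquiv t X.A (𝟙 X.A) = adj.unit.app t := adj.homEquiv_id t
  exact congrArg (fun k => k.left) (h2.symm.trans h1)

lemma comparison_essSurj {A : C} (adj : Over.forget A ⊣ starA A) :
    (Comonad.comparison adj).EssSurj where
  mem_essImage X := by
    refine ⟨overOfCoalgebra adj X,
      ⟨Comonad.Coalgebra.isoMk (Iso.refl _) ?_⟩⟩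
    let u : X.A ⟶ adj.toComonad.obj X.A := (adj.unit.app (overOfCoalgebra adj X)).left
    change u ≫ adj.toComonad.map (𝟙 X.A) = 𝟙 X.A ≫ X.a
    rw [adj.toComonad.map_id, Category.id_comp, Category.comp_id]
    exact unit_app_of_coalgebra adj X

/-- For a category `C` with binary products and an object `A`, the forgetful functor
`Over A ⥤ C` has right adjoint `X ↦ (X ⨯ A ⟶ A)`; the comonad on `C` induced by any
such adjunction has underlying endofunctor `X ↦ X ⨯ A`, and the comparison functor from
`Over A` to the Eilenberg–Moore category of coalgebras of this comonad is an
equivalence: `Over.forget A` is comonadic. -/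
theorem statement19 (A : C) :
    Nonempty (Over.forget A ⊣ starA A) ∧
      ∀ adj : Over.forget A ⊣ starA A,
        Nonempty (adj.toComonad.toFunctor ≅ prodWith A) ∧
          (Comonad.comparison adj).IsEquivalence := by
  refine ⟨⟨forgetAdjStarA A⟩, fun adj => ⟨⟨Iso.refl (prodWith A)⟩, ?_⟩⟩
  have := comparison_full adj
  have := comparison_essSurj adj
  exact {}

end
end
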